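/- Let (X,d,𝔪) be a PI space with 𝔪(X) = ∞, and let E ⊂ X be an indecomposable set. Then sat(E) is indecomposable and saturated; in particular, sat(sat(E)) = sat(E). -/

import Mathlib

open MeasureTheory Metric Filter Set ENNReal NNReal Topology

/-- A curve: a rectifiable continuous map from a compact interval into `X`,
parametrized by arc length (hence `1`-Lipschitz on `[0, len]`). -/
structure Curve (X : Type*) [MetricSpace X] where
  len : ℝ
  len_nonneg : 0 ≤ len
  toFun : ℝ → X
  lipschitzOn : LipschitzOnWith 1 toFun (Set.Icc 0 len)

namespace Curve

variable {X : Type*} [MetricSpace X]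

/-- A curve is nonconstant if it attains two distinct values. -/
def IsNonconstant (γ : Curve X) : Prop :=
  ∃ s ∈ Set.Icc (0:ℝ) γ.len, ∃ t ∈ Set.Icc (0:ℝ) γ.len, γ.toFun s ≠ γ.toFun t

/-- A curve lies in a set `W`. -/
def IsIn (γ : Curve X) (W : Set X) : Prop :=
  ∀ s ∈ Set.Icc (0:ℝ) γ.len, γ.toFun s ∈ W

end Curve

variable {X : Type*} [MetricSpace X] [MeasurableSpace X] [BorelSpace X]

/-- The curve integral `∫_γ g ds` for an arc-length parametrized curve. -/
noncomputable def curveLintegral (g : X → ℝ≥0∞) (γ : Curve X) : ℝ≥0∞ :=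
  ∫⁻ s in Set.Icc (0:ℝ) γ.len, g (γ.toFun s)

/-- The upper gradient inequality `|u(x) - u(y)| ≤ ∫_γ g ds` along a curve `γ`
with endpoints `x, y`. -/
def UpperGradIneq (g : X → ℝ≥0∞) (u : X → ℝ) (γ : Curve X) : Prop :=
  ENNReal.ofReal |u (γ.toFun 0) - u (γ.toFun γ.len)| ≤ curveLintegral g γ

/-- The 1-modulus of a family of curves. -/
noncomputable def mod1 (μ : Measure X) (Γ : Set (Curve X)) : ℝ≥0∞ :=
  ⨅ (ρ : X → ℝ≥0∞) (_ : Measurable ρ ∧ ∀ γ ∈ Γ, 1 ≤ curveLintegral ρ γ),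
    ∫⁻ x, ρ x ∂μ

/-- `g` is a 1-weak upper gradient of `u` in `W`: the upper gradient inequality
holds for all nonconstant curves in `W` outside a family of 1-modulus zero. -/
def IsWeakUpperGradientOn (μ : Measure X) (g : X → ℝ≥0∞) (u : X → ℝ) (W : Set X) : Prop :=
  Measurable g ∧
    mod1 μ {γ : Curve X | γ.IsNonconstant ∧ γ.IsIn W ∧ ¬ UpperGradIneq g u γ} = 0

/-- `g` is a (strong) upper gradient of `u` in `X`. -/
def IsUpperGradient (g : X → ℝ≥0∞) (u : X → ℝ) : Prop :=
  Measurable g ∧ ∀ γ : Curve X, γ.IsNonconstant → UpperGradIneq g u γ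

/-- `∫_W g_u dμ`: the integral over `W` of the minimal 1-weak upper gradient of `u`
in `W`, equivalently the infimum of `∫_W g dμ` over all 1-weak upper gradients `g`
of `u` in `W`. -/
noncomputable def gradEnergy (μ : Measure X) (u : X → ℝ) (W : Set X) : ℝ≥0∞ :=
  ⨅ (g : X → ℝ≥0∞) (_ : IsWeakUpperGradientOn μ g u W), ∫⁻ x in W, g x ∂μ

/-- `u` is locally Lipschitz on `W`. -/
def LocLipschitzOn (u : X → ℝ) (W : Set X) : Prop :=
  ∀ x ∈ W, ∃ K : ℝ≥0, ∃ t ∈ nhdsWithin x W, LipschitzOnWith K u t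

/-- Convergence `uᵢ → v` in `L¹_loc(W)`. -/
def TendstoL1loc (μ : Measure X) (W : Set X) (u : ℕ → X → ℝ) (v : X → ℝ) : Prop :=
  ∀ W' : Set X, IsOpen W' → IsCompact (closure W') → closure W' ⊆ W →
    Tendsto (fun i => ∫⁻ x in W', ENNReal.ofReal |u i x - v x| ∂μ) atTop (𝓝 0)

/-- The total variation `‖Dv‖(W)` of a function `v` in an open set `W`. -/
noncomputable def variationOn (μ : Measure X) (v : X → ℝ) (W : Set X) : ℝ≥0∞ :=
  ⨅ (u : ℕ → X → ℝ) (_ : (∀ i, LocLipschitzOn (u i) W) ∧ TendstoL1loc μ W u v),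
    Filter.liminf (fun i => gradEnergy μ (u i) W) Filter.atTop

/-- The total variation `‖Dv‖(A)` of a function `v` in an arbitrary set `A`. -/
noncomputable def totalVar (μ : Measure X) (v : X → ℝ) (A : Set X) : ℝ≥0∞ :=
  ⨅ (W : Set X) (_ : IsOpen W ∧ A ⊆ W), variationOn μ v W

/-- The perimeter `P(E, A) = ‖Dχ_E‖(A)`. -/
noncomputable def perimeter (μ : Measure X) (E A : Set X) : ℝ≥0∞ :=
  totalVar μ (Set.indicator E fun _ => (1 : ℝ)) A

/-- The measure `μ` is doubling. -/
def IsDoublingMeasure (μ : Measure X) : Prop :=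
  ∃ C : ℝ≥0∞, 1 ≤ C ∧ ∀ (x : X) (r : ℝ), 0 < r → μ (ball x (2 * r)) ≤ C * μ (ball x r)

/-- The space supports a (1,1)-Poincaré inequality:
`⨍_{B(x,r)} |u - u_{B(x,r)}| dμ ≤ C r ⨍_{B(x,λr)} g dμ` for every ball, every
`u ∈ L¹_loc(X)` and every upper gradient `g` of `u` (stated here multiplied
through by the measures of the two balls). -/
def SupportsPoincare (μ : Measure X) : Prop :=
  ∃ C lam : ℝ, 0 < C ∧ 1 ≤ lam ∧
    ∀ (x : X) (r : ℝ), 0 < r → ∀ (u : X → ℝ) (g : X → ℝ≥0∞),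
      (∀ (y : X) (s : ℝ), IntegrableOn u (ball y s) μ) → IsUpperGradient g u →
        μ (ball x (lam * r)) *
            ∫⁻ y in ball x r, ENNReal.ofReal |u y - ⨍ z in ball x r, u z ∂μ| ∂μ ≤
          ENNReal.ofReal (C * r) * μ (ball x r) * ∫⁻ y in ball x (lam * r), g y ∂μ

/-- `(X, d, μ)` is a PI space: complete, doubling, supporting a (1,1)-Poincaré
inequality. -/
def IsPISpace (μ : Measure X) : Prop :=
  CompleteSpace X ∧ IsDoublingMeasure μ ∧ SupportsPoincare μ

/-- A set `E` of finite perimeter is decomposable in a Borel set `D` if there is a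
partition `{F, G}` of `E ∩ D` into sets of finite perimeter in `D`, both of positive
measure, with `P(E,D) = P(F,D) + P(G,D)`. -/
def IsDecomposableIn (μ : Measure X) (E D : Set X) : Prop :=
  ∃ F G : Set X, MeasurableSet F ∧ MeasurableSet G ∧ Disjoint F G ∧ F ∪ G = E ∩ D ∧
    perimeter μ F D < ⊤ ∧ perimeter μ G D < ⊤ ∧ 0 < μ F ∧ 0 < μ G ∧
    perimeter μ E D = perimeter μ F D + perimeter μ G D

/-- `E` is indecomposable in `D`. -/
def IsIndecomposableIn (μ : Measure X) (E D : Set X) : Prop :=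
  ¬ IsDecomposableIn μ E D

/-- `{F i}_{i ∈ I}` is a (finite or countable) partition of `E` into indecomposable
Borel sets of positive measure and finite perimeter whose perimeters sum to `P(E,X)`;
this is the defining property of the essential connected components `𝒞𝒞ᵉ(E)`. -/
def IsEssentialPartition (μ : Measure X) (E : Set X) (I : Set ℕ) (F : ℕ → Set X) : Prop :=
  (∀ i ∈ I, MeasurableSet (F i)) ∧
  (∀ i ∈ I, ∀ j ∈ I, i ≠ j → Disjoint (F i) (F j)) ∧
  (⋃ i ∈ I, F i) = E ∧
  (∀ i ∈ I, 0 < μ (F i)) ∧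
  (∀ i ∈ I, perimeter μ (F i) Set.univ < ⊤) ∧
  (∀ i ∈ I, IsIndecomposableIn μ (F i) Set.univ) ∧
  perimeter μ E Set.univ = ∑' i : I, perimeter μ (F i.1) Set.univ

/-- Given a decomposition `{G i}_{i ∈ I}` of `X ∖ E` into essential connected
components, the saturation of `E`: the union of `E` and its holes, i.e. the
components of finite measure. -/
def saturationOf (μ : Measure X) (E : Set X) (I : Set ℕ) (G : ℕ → Set X) : Set X :=
  E ∪ ⋃ (i : ℕ) (_ : i ∈ I ∧ μ (G i) < ⊤), G i

/-- The measure-theoretic boundary `∂* E`: points where both `E` and its complement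
have strictly positive upper density. -/
def mtBoundary (μ : Measure X) (E : Set X) : Set X :=
  {x : X |
    0 < Filter.limsup (fun r => μ (ball x r ∩ E) / μ (ball x r)) (nhdsWithin 0 (Set.Ioi 0)) ∧
    0 < Filter.limsup (fun r => μ (ball x r \ E) / μ (ball x r)) (nhdsWithin 0 (Set.Ioi 0))}

/-- The restricted codimension-one Hausdorff content `ℋ_R`. -/
noncomputable def codimOneContent (μ : Measure X) (R : ℝ) (A : Set X) : ℝ≥0∞ :=
  ⨅ (s : Set (X × ℝ))
    (_ : s.Countable ∧ (∀ p ∈ s, 0 < p.2 ∧ p.2 ≤ R) ∧ A ⊆ ⋃ p ∈ s, ball p.1 p.2),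
    ∑' p : s, μ (ball (p : X × ℝ).1 (p : X × ℝ).2) / ENNReal.ofReal (p : X × ℝ).2

/-- The codimension-one Hausdorff measure `ℋ(A) = lim_{R → 0} ℋ_R(A)`. -/
noncomputable def codimOneHausdorff (μ : Measure X) (A : Set X) : ℝ≥0∞ :=
  ⨆ (R : ℝ) (_ : 0 < R), codimOneContent μ R A

set_option linter.unusedSectionVars false

/-- A function on `[0, L]` whose increments are controlled by the integrals of `G` has derivative
bounded by `G` almost everywhere. -/
theorem ae_ofReal_abs_deriv_le {f : ℝ → ℝ} {L : ℝ} (hL : 0 ≤ L)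
    (hf : AbsolutelyContinuousOnInterval f 0 L) {G : ℝ → ℝ≥0∞}
    (hG : AEMeasurable G (volume.restrict (Icc 0 L)))
    (hGfin : ∫⁻ s in Icc 0 L, G s ≠ ⊤)
    (hinc : ∀ s t, 0 ≤ s → s ≤ t → t ≤ L →
      ENNReal.ofReal |f s - f t| ≤ ∫⁻ r in Icc s t, G r) :
    ∀ᵐ t, t ∈ Icc 0 L → ENNReal.ofReal |deriv f t| ≤ G t := by
  have hGon : IntegrableOn (fun t => (G t).toReal) (Icc 0 L) :=
    integrable_toReal_of_lintegral_ne_top hG hGfin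
  have hGint : IntervalIntegrable (fun t => (G t).toReal) volume 0 L := by
    rw [intervalIntegrable_iff_integrableOn_Icc_of_le hL]; exact hGon
  have key : ∀ s t, 0 ≤ s → s ≤ t → t ≤ L →
      |f s - f t| ≤ (∫ r in (0 : ℝ)..t, (G r).toReal) - ∫ r in (0 : ℝ)..s, (G r).toReal := by
    intro s t hs hst ht
    have hsub : Icc s t ⊆ Icc 0 L := Icc_subset_Icc hs ht
    have hii : ∀ r, 0 ≤ r → r ≤ L → IntervalIntegrable (fun t => (G t).toReal) volume 0 r := by
      intro r hr hrL
      rw [intervalIntegrable_iff_integrableOn_Icc_of_le hr]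
      exact hGon.mono_set (Icc_subset_Icc le_rfl hrL)
    rw [intervalIntegral.integral_interval_sub_left (hii t (hs.trans hst) ht)
      (hii s hs (hst.trans ht)), intervalIntegral.integral_of_le hst,
      ← integral_Icc_eq_integral_Ioc]
    have hfin : ∫⁻ r in Icc s t, G r ≠ ⊤ := ne_top_of_le_ne_top hGfin (lintegral_mono_set hsub)
    have hm : AEMeasurable G (volume.restrict (Icc s t)) :=
      hG.mono_measure (Measure.restrict_mono hsub le_rfl)
    rw [integral_toReal hm (ae_lt_top' hm hfin)]
    exact (ENNReal.ofReal_le_iff_le_toReal hfin).1 (hinc s t hs hst ht)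
  have h0 : ∀ᵐ x : ℝ, x ≠ 0 := by simp [ae_iff, measure_singleton]
  have h1 : ∀ᵐ x : ℝ, x ≠ L := by simp [ae_iff, measure_singleton]
  filter_upwards [hf.ae_differentiableAt, hGint.ae_hasDerivAt_integral, h0, h1]
    with x hx₁ hx₂ hx0 hxL hx
  have hxu : x ∈ uIcc 0 L := by rwa [uIcc_of_le hL]
  have hd := (hx₁ hxu).hasDerivAt
  have hΦ := hx₂ hxu 0 (by simp)
  have hnhds : Icc 0 L ∈ 𝓝 x :=
    Icc_mem_nhds (lt_of_le_of_ne hx.1 (Ne.symm hx0)) (lt_of_le_of_ne hx.2 hxL)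
  have hm1 : MonotoneOn (fun y => (∫ r in (0 : ℝ)..y, (G r).toReal) - f y) (Icc 0 L) := by
    intro s hs t ht hst
    have := abs_le.1 (key s t hs.1 hst ht.2)
    dsimp only; linarith
  have hm2 : MonotoneOn (fun y => (∫ r in (0 : ℝ)..y, (G r).toReal) + f y) (Icc 0 L) := by
    intro s hs t ht hst
    have := abs_le.1 (key s t hs.1 hst ht.2)
    dsimp only; linarith
  have e1 := hm1.derivWithin_nonneg (x := x)
  have e2 := hm2.derivWithin_nonneg (x := x)
  rw [derivWithin_of_mem_nhds hnhds, (hΦ.fun_sub hd).deriv] at e1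
  rw [derivWithin_of_mem_nhds hnhds, (hΦ.fun_add hd).deriv] at e2
  calc ENNReal.ofReal |deriv f x| ≤ ENNReal.ofReal (G x).toReal :=
        ENNReal.ofReal_le_ofReal (abs_le.2 ⟨by linarith, by linarith⟩)
    _ ≤ G x := ENNReal.ofReal_toReal_le

theorem ofReal_abs_sub_le_lintegral_of_deriv_le {w : ℝ → ℝ} {L : ℝ} (hL : 0 ≤ L)
    (hw : AbsolutelyContinuousOnInterval w 0 L) {H : ℝ → ℝ≥0∞}
    (hH : ∀ᵐ t, t ∈ Icc 0 L → ENNReal.ofReal |deriv w t| ≤ H t) :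
    ENNReal.ofReal |w 0 - w L| ≤ ∫⁻ t in Icc 0 L, H t := by
  rw [abs_sub_comm, ← hw.integral_deriv_eq_sub, intervalIntegral.integral_of_le hL,
    ← integral_Icc_eq_integral_Ioc, ← Real.norm_eq_abs, ofReal_norm]
  refine (enorm_integral_le_lintegral_enorm _).trans ?_
  refine lintegral_mono_ae ?_
  rw [ae_restrict_iff' measurableSet_Icc]
  filter_upwards [hH] with t ht htI
  rw [← ofReal_norm, Real.norm_eq_abs]
  exact ht htI

theorem deriv_eq_of_le_of_eq {f w : ℝ → ℝ} {x : ℝ} (hf : DifferentiableAt ℝ f x)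
    (hw : DifferentiableAt ℝ w x) (hle : ∀ y, f y ≤ w y) (heq : f x = w x) :
    deriv f x = deriv w x := by
  have hmin : IsLocalMin (fun y => w y - f y) x :=
    Filter.Eventually.of_forall fun y => by have := hle y; dsimp only; linarith
  have := hmin.deriv_eq_zero
  rw [(hw.hasDerivAt.fun_sub hf.hasDerivAt).deriv] at this
  linarith

/-- The fundamental estimate for lattice operations: if `w` touches, at every point, one of `f`
and `k` (always from the same side), then the derivative bounds for `f` and `k` pass to `w`. -/
theorem ofReal_abs_sub_le_lintegral_ite {f k w : ℝ → ℝ} {L : ℝ} (hL : 0 ≤ L)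
    (hf : AbsolutelyContinuousOnInterval f 0 L) (hk : AbsolutelyContinuousOnInterval k 0 L)
    (hw : AbsolutelyContinuousOnInterval w 0 L) {G H : ℝ → ℝ≥0∞}
    (hG : ∀ᵐ t, t ∈ Icc 0 L → ENNReal.ofReal |deriv f t| ≤ G t)
    (hH : ∀ᵐ t, t ∈ Icc 0 L → ENNReal.ofReal |deriv k t| ≤ H t)
    (p : ℝ → Prop) [DecidablePred p]
    (hpos : ∀ t, p t → w t = f t) (hneg : ∀ t, ¬ p t → w t = k t)
    (hside : (∀ t, f t ≤ w t ∧ k t ≤ w t) ∨ ∀ t, w t ≤ f t ∧ w t ≤ k t) :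
    ENNReal.ofReal |w 0 - w L| ≤ ∫⁻ t in Icc 0 L, if p t then G t else H t := by
  refine ofReal_abs_sub_le_lintegral_of_deriv_le hL hw ?_
  filter_upwards [hG, hH, hf.ae_differentiableAt, hk.ae_differentiableAt, hw.ae_differentiableAt]
    with t hGt hHt hft hkt hwt ht
  have htu : t ∈ uIcc 0 L := by rwa [uIcc_of_le hL]
  by_cases h : p t
  · have : deriv w t = deriv f t := by
      rcases hside with hs | hs
      · exact (deriv_eq_of_le_of_eq (hft htu) (hwt htu) (fun y => (hs y).1) (hpos t h).symm).symm
      · exact deriv_eq_of_le_of_eq (hwt htu) (hft htu) (fun y => (hs y).1) (hpos t h)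
    simpa [h, this] using hGt ht
  · have : deriv w t = deriv k t := by
      rcases hside with hs | hs
      · exact (deriv_eq_of_le_of_eq (hkt htu) (hwt htu) (fun y => (hs y).2) (hneg t h).symm).symm
      · exact deriv_eq_of_le_of_eq (hwt htu) (hkt htu) (fun y => (hs y).2) (hneg t h)
    simpa [h, this] using hHt ht

namespace Curve

/-- The restriction of a curve to a subinterval of its domain. -/
def restrict (γ : Curve X) {s t : ℝ} (hs : 0 ≤ s) (hst : s ≤ t) (ht : t ≤ γ.len) : Curve X where
  len := t - s
  len_nonneg := sub_nonneg.2 hst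
  toFun r := γ.toFun (r + s)
  lipschitzOn := by
    intro a ha b hb
    have := γ.lipschitzOn (x := a + s) ⟨by linarith [ha.1], by linarith [ha.2]⟩
      (y := b + s) ⟨by linarith [hb.1], by linarith [hb.2]⟩
    simpa [edist_add_right] using this

theorem aemeasurable_comp {g : X → ℝ≥0∞} (hg : Measurable g) (γ : Curve X) :
    AEMeasurable (fun t => g (γ.toFun t)) (volume.restrict (Icc 0 γ.len)) :=
  hg.comp_aemeasurable (γ.lipschitzOn.continuousOn.aemeasurable measurableSet_Icc)

end Curve

theorem curveLintegral_restrict (g : X → ℝ≥0∞) (γ : Curve X) {s t : ℝ} (hs : 0 ≤ s)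
    (hst : s ≤ t) (ht : t ≤ γ.len) :
    curveLintegral g (γ.restrict hs hst ht) = ∫⁻ r in Icc s t, g (γ.toFun r) := by
  unfold curveLintegral
  have h := (measurePreserving_add_right volume s).setLIntegral_comp_preimage_emb
    (measurableEmbedding_addRight s) (fun r => g (γ.toFun r)) (Icc s t)
  rw [← h]
  simp [Curve.restrict]

theorem IsUpperGradient.ofReal_abs_sub_le {g : X → ℝ≥0∞} {u : X → ℝ} (h : IsUpperGradient g u)
    (γ : Curve X) {s t : ℝ} (hs : 0 ≤ s) (hst : s ≤ t) (ht : t ≤ γ.len) :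
    ENNReal.ofReal |u (γ.toFun s) - u (γ.toFun t)| ≤ ∫⁻ r in Icc s t, g (γ.toFun r) := by
  by_cases hc : (γ.restrict hs hst ht).IsNonconstant
  · have := h.2 _ hc
    rw [UpperGradIneq, curveLintegral_restrict] at this
    simpa [Curve.restrict] using this
  · have : γ.toFun s = γ.toFun t := by
      by_contra hne
      refine hc ⟨0, ⟨le_rfl, sub_nonneg.2 hst⟩, t - s, ⟨sub_nonneg.2 hst, le_rfl⟩, ?_⟩
      simpa [Curve.restrict] using hne
    simp [this]

theorem LocallyLipschitz.absolutelyContinuousOnInterval_curve {u : X → ℝ}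
    (hu : LocallyLipschitz u) (γ : Curve X) :
    AbsolutelyContinuousOnInterval (fun t => u (γ.toFun t)) 0 γ.len := by
  have hc : IsCompact (γ.toFun '' Icc 0 γ.len) :=
    isCompact_Icc.image_of_continuousOn γ.lipschitzOn.continuousOn
  obtain ⟨K, hK⟩ := hu.locallyLipschitzOn.exists_lipschitzOnWith_of_compact hc
  refine LipschitzOnWith.absolutelyContinuousOnInterval (K := K * 1) ?_
  rw [uIcc_of_le γ.len_nonneg]
  exact hK.comp γ.lipschitzOn (mapsTo_image _ _)

theorem IsUpperGradient.ae_ofReal_abs_deriv_le {g : X → ℝ≥0∞} {u : X → ℝ}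
    (h : IsUpperGradient g u) (hu : LocallyLipschitz u) (γ : Curve X)
    (hfin : curveLintegral g γ ≠ ⊤) :
    ∀ᵐ t, t ∈ Icc 0 γ.len → ENNReal.ofReal |deriv (fun t => u (γ.toFun t)) t| ≤ g (γ.toFun t) :=
  _root_.ae_ofReal_abs_deriv_le γ.len_nonneg (hu.absolutelyContinuousOnInterval_curve γ)
    (γ.aemeasurable_comp h.1) hfin fun _ _ hs hst ht => h.ofReal_abs_sub_le γ hs hst ht

/-- If `w` is the maximum or the minimum of `u` and `v`, and equals `u` on `S` and `v` off `S`,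
then gluing upper gradients of `u` and `v` along `S` gives an upper gradient of `w`, up to an
arbitrarily small multiple of their sum. -/
theorem IsUpperGradient.piecewise {g h : X → ℝ≥0∞} {u v w : X → ℝ} (hg : IsUpperGradient g u)
    (hh : IsUpperGradient h v) (hu : LocallyLipschitz u) (hv : LocallyLipschitz v)
    (hw : LocallyLipschitz w) {S : Set X} [DecidablePred (· ∈ S)] (hS : MeasurableSet S)
    (hpos : ∀ x ∈ S, w x = u x) (hneg : ∀ x ∉ S, w x = v x)
    (hside : (∀ x, u x ≤ w x ∧ v x ≤ w x) ∨ ∀ x, w x ≤ u x ∧ w x ≤ v x)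
    {ε : ℝ≥0∞} (hε : ε ≠ 0) :
    IsUpperGradient (fun x => S.piecewise g h x + ε * (g x + h x)) w := by
  refine ⟨(hg.1.piecewise hS hh.1).add ((hg.1.add hh.1).const_mul ε), fun γ _ => ?_⟩
  rw [UpperGradIneq]
  have hsum : ∫⁻ t in Icc 0 γ.len, ε * (g (γ.toFun t) + h (γ.toFun t)) =
      ε * (curveLintegral g γ + curveLintegral h γ) := by
    have hm : AEMeasurable (fun t => g (γ.toFun t) + h (γ.toFun t))
        (volume.restrict (Icc 0 γ.len)) :=
      (γ.aemeasurable_comp hg.1).add (γ.aemeasurable_comp hh.1)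
    rw [lintegral_const_mul'' _ hm, lintegral_add_left' (γ.aemeasurable_comp hg.1)]
    rfl
  by_cases hfin : curveLintegral g γ + curveLintegral h γ = ⊤
  · have : ∫⁻ t in Icc 0 γ.len, ε * (g (γ.toFun t) + h (γ.toFun t)) ≤
        curveLintegral (fun x => S.piecewise g h x + ε * (g x + h x)) γ :=
      lintegral_mono fun t => le_add_self
    rw [hsum, hfin, ENNReal.mul_top hε] at this
    exact le_top.trans this
  · rw [ENNReal.add_eq_top, not_or] at hfin
    have key := ofReal_abs_sub_le_lintegral_ite γ.len_nonneg
      (hu.absolutelyContinuousOnInterval_curve γ) (hv.absolutelyContinuousOnInterval_curve γ)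
      (hw.absolutelyContinuousOnInterval_curve γ)
      (hg.ae_ofReal_abs_deriv_le hu γ hfin.1) (hh.ae_ofReal_abs_deriv_le hv γ hfin.2)
      (fun t => γ.toFun t ∈ S) (fun t ht => hpos _ ht) (fun t ht => hneg _ ht)
      (hside.imp (fun H t => H _) (fun H t => H _))
    refine key.trans (lintegral_mono fun t => ?_)
    exact le_self_add

/-- Adding a small function to a weak upper gradient yields a genuine upper gradient. -/
theorem exists_isUpperGradient_of_gradEnergy_lt {μ : Measure X} {u : X → ℝ} {c : ℝ≥0∞}
    (h : gradEnergy μ u univ < c) : ∃ g, IsUpperGradient g u ∧ ∫⁻ x, g x ∂μ < c := by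
  simp only [gradEnergy, iInf_lt_iff, Measure.restrict_univ] at h
  obtain ⟨g, ⟨hgm, hmod⟩, hgc⟩ := h
  have hε : c - ∫⁻ x, g x ∂μ ≠ 0 := (tsub_pos_of_lt hgc).ne'
  obtain ⟨δ, hδ, hδsum⟩ := ENNReal.exists_pos_sum_of_countable hε ℕ
  have hex : ∀ n, ∃ ρ : X → ℝ≥0∞, (Measurable ρ ∧ ∀ γ ∈ {γ : Curve X | γ.IsNonconstant ∧
      γ.IsIn univ ∧ ¬ UpperGradIneq g u γ}, 1 ≤ curveLintegral ρ γ) ∧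
      ∫⁻ x, ρ x ∂μ < δ n := by
    intro n
    have : mod1 μ {γ : Curve X | γ.IsNonconstant ∧ γ.IsIn univ ∧ ¬ UpperGradIneq g u γ} <
        δ n := by rw [hmod]; exact_mod_cast hδ n
    simpa only [mod1, iInf_lt_iff, exists_prop] using this
  choose ρ hρ hρδ using hex
  have hm : Measurable fun x => ∑' n, ρ n x := Measurable.tsum fun n => (hρ n).1
  refine ⟨fun x => g x + ∑' n, ρ n x, ⟨hgm.add hm, fun γ hγ => ?_⟩, ?_⟩
  · by_cases hu : UpperGradIneq g u γ
    · exact hu.trans (lintegral_mono fun t => le_self_add)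
    · have h1 : ∀ n, 1 ≤ curveLintegral (ρ n) γ :=
        fun n => (hρ n).2 γ ⟨hγ, fun _ _ => mem_univ _, hu⟩
      have h2 : ⊤ ≤ curveLintegral (fun x => ∑' n, ρ n x) γ := by
        unfold curveLintegral
        rw [lintegral_tsum fun n => γ.aemeasurable_comp (hρ n).1,
          ← ENNReal.tsum_const_eq_top_of_ne_zero (α := ℕ) one_ne_zero]
        exact ENNReal.tsum_le_tsum h1
      exact le_top.trans (h2.trans (lintegral_mono fun t => le_add_self))
  · rw [lintegral_add_left hgm, lintegral_tsum fun n => (hρ n).1.aemeasurable]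
    calc ∫⁻ x, g x ∂μ + ∑' n, ∫⁻ x, ρ n x ∂μ
        ≤ ∫⁻ x, g x ∂μ + ∑' n, (δ n : ℝ≥0∞) := by
          gcongr with n; exact (hρδ n).le
      _ < ∫⁻ x, g x ∂μ + (c - ∫⁻ x, g x ∂μ) :=
          ENNReal.add_lt_add_left hgc.ne_top hδsum
      _ = c := add_tsub_cancel_of_le hgc.le

theorem IsUpperGradient.gradEnergy_le {g : X → ℝ≥0∞} {u : X → ℝ} (h : IsUpperGradient g u)
    (μ : Measure X) : gradEnergy μ u univ ≤ ∫⁻ x, g x ∂μ := by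
  have hw : IsWeakUpperGradientOn μ g u univ := by
    refine ⟨h.1, le_antisymm ?_ zero_le⟩
    refine (iInf₂_le (fun _ => 0) ⟨measurable_const, fun γ hγ => ?_⟩).trans (by simp)
    exact absurd (h.2 γ hγ.1) hγ.2.2
  exact (iInf₂_le g hw).trans (by simp)

theorem gradEnergy_max_add_gradEnergy_min_le {μ : Measure X} {u v : X → ℝ}
    (hu : LocallyLipschitz u) (hv : LocallyLipschitz v) :
    gradEnergy μ (fun x => max (u x) (v x)) univ + gradEnergy μ (fun x => min (u x) (v x)) univ ≤
      gradEnergy μ u univ + gradEnergy μ v univ := by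
  classical
  by_cases htop : gradEnergy μ u univ + gradEnergy μ v univ = ⊤
  · rw [htop]; exact le_top
  rw [ENNReal.add_eq_top, not_or] at htop
  refine ENNReal.le_of_forall_pos_le_add fun η hη _ => ?_
  have hη2 : (η : ℝ≥0∞) / 4 ≠ 0 := by simp [hη.ne']
  obtain ⟨g, hg, hgE⟩ := exists_isUpperGradient_of_gradEnergy_lt
    (ENNReal.lt_add_right htop.1 hη2)
  obtain ⟨h, hh, hhE⟩ := exists_isUpperGradient_of_gradEnergy_lt
    (ENNReal.lt_add_right htop.2 hη2)
  set I := ∫⁻ x, g x ∂μ + ∫⁻ x, h x ∂μ with hI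
  have hIfin : I ≠ ⊤ := ENNReal.add_ne_top.2 ⟨hgE.ne_top, hhE.ne_top⟩
  obtain ⟨ε, hεpos, hε⟩ := ENNReal.exists_nnreal_pos_mul_lt hIfin hη2
  have hε0 : (ε : ℝ≥0∞) ≠ 0 := by exact_mod_cast hεpos.ne'
  have hS : MeasurableSet {x | v x ≤ u x} :=
    (isClosed_le hv.continuous hu.continuous).measurableSet
  have hmax := hg.piecewise hh hu hv (hu.max hv) hS
    (fun x hx => max_eq_left hx) (fun x hx => max_eq_right (not_le.1 hx).le)
    (Or.inl fun x => ⟨le_max_left _ _, le_max_right _ _⟩) hε0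
  have hmin := hh.piecewise hg hv hu (hu.min hv) hS
    (fun x hx => min_eq_right hx) (fun x hx => min_eq_left (not_le.1 hx).le)
    (Or.inr fun x => ⟨min_le_right _ _, min_le_left _ _⟩) hε0
  have hgh : Measurable fun x => g x + h x := hg.1.add hh.1
  have hhg : Measurable fun x => h x + g x := hh.1.add hg.1
  have hpw : ∫⁻ x, {x | v x ≤ u x}.piecewise g h x ∂μ +
      ∫⁻ x, {x | v x ≤ u x}.piecewise h g x ∂μ = I := by
    rw [← lintegral_add_left (hg.1.piecewise hS hh.1), hI, ← lintegral_add_left hg.1]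
    refine lintegral_congr fun x => ?_
    by_cases hx : x ∈ {x | v x ≤ u x} <;> simp [hx, add_comm]
  have h1 := hmax.gradEnergy_le μ
  have h2 := hmin.gradEnergy_le μ
  rw [lintegral_add_right _ (hgh.const_mul ε), lintegral_const_mul _ hgh,
    lintegral_add_left hg.1] at h1
  rw [lintegral_add_right _ (hhg.const_mul ε), lintegral_const_mul _ hhg,
    lintegral_add_right _ hg.1, add_comm (∫⁻ x, h x ∂μ)] at h2
  calc _ ≤ _ := add_le_add h1 h2
    _ = I + (ε * I + ε * I) := by rw [← hpw, hpw, ← hI, add_add_add_comm, hpw]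
    _ ≤ (gradEnergy μ u univ + η / 4) + (gradEnergy μ v univ + η / 4) + (η / 4 + η / 4) := by
        gcongr; exact add_le_add hgE.le hhE.le
    _ = gradEnergy μ u univ + gradEnergy μ v univ + 4 * (η / 4) := by ring
    _ = gradEnergy μ u univ + gradEnergy μ v univ + η := by
        rw [ENNReal.mul_div_cancel (by norm_num) (by norm_num)]

theorem gradEnergy_one_sub_le (μ : Measure X) (u : X → ℝ) :
    gradEnergy μ (fun x => 1 - u x) univ ≤ gradEnergy μ u univ := by
  refine le_of_forall_gt fun c hc => ?_
  obtain ⟨g, hg, hgc⟩ := exists_isUpperGradient_of_gradEnergy_lt hc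
  refine lt_of_le_of_lt (IsUpperGradient.gradEnergy_le ⟨hg.1, fun γ hγ => ?_⟩ μ) hgc
  have := hg.2 γ hγ
  rw [UpperGradIneq] at this ⊢
  rw [abs_sub_comm] at this
  simpa using this

theorem locLipschitzOn_univ_iff {u : X → ℝ} : LocLipschitzOn u univ ↔ LocallyLipschitz u := by
  simp [LocLipschitzOn, LocallyLipschitz]

theorem perimeter_univ_eq (μ : Measure X) (A : Set X) :
    perimeter μ A univ = variationOn μ (A.indicator fun _ => (1 : ℝ)) univ := by
  refine le_antisymm (iInf₂_le univ ⟨isOpen_univ, Subset.rfl⟩) (le_iInf₂ fun W hW => ?_)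
  rw [univ_subset_iff.1 hW.2]

/-- Lower semicontinuity of the perimeter, in terms of neighbourhoods. -/
theorem exists_ball_le_gradEnergy (μ : Measure X) (x₀ : X) {A : Set X} {a : ℝ≥0∞}
    (ha : a < perimeter μ A univ ∨ a = 0) :
    ∃ R : ℝ, ∃ ε : ℝ≥0∞, ε ≠ 0 ∧ ∀ u : X → ℝ, LocallyLipschitz u →
      ∫⁻ x in ball x₀ R, ENNReal.ofReal |u x - A.indicator (fun _ => (1 : ℝ)) x| ∂μ ≤ ε →
      a ≤ gradEnergy μ u univ := by
  rcases ha with ha | rfl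
  swap
  · exact ⟨0, 1, one_ne_zero, fun _ _ _ => zero_le⟩
  by_contra! hcon
  choose u hu hud hua using fun n : ℕ =>
    hcon n ((n : ℝ≥0∞) + 1)⁻¹ (ENNReal.inv_ne_zero.2 (by simp))
  refine ha.not_ge ?_
  rw [perimeter_univ_eq]
  refine (iInf₂_le u ⟨fun n => locLipschitzOn_univ_iff.2 (hu n), fun W' _ hc _ => ?_⟩).trans ?_
  · refine liminf_le_of_le (by isBoundedDefault) fun b hb => ?_
    obtain ⟨n, hn⟩ := hb.exists
    exact hn.trans (hua n).le
  · obtain ⟨R, hR⟩ := (hc.isBounded.subset subset_closure).subset_ball x₀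
    have hlim : Tendsto (fun n : ℕ => ((n : ℝ≥0∞) + 1)⁻¹) atTop (𝓝 0) := by
      have := (tendsto_add_atTop_iff_nat 1).2 ENNReal.tendsto_inv_nat_nhds_zero
      simpa using this
    refine tendsto_of_tendsto_of_tendsto_of_le_of_le' tendsto_const_nhds hlim
      (Eventually.of_forall fun _ => zero_le) ?_
    obtain ⟨N, hN⟩ := exists_nat_ge R
    filter_upwards [eventually_ge_atTop N] with n hn
    refine (lintegral_mono_set (hR.trans (ball_subset_ball ?_))).trans (hud n)
    exact hN.trans (by exact_mod_cast hn)

theorem exists_approx_of_perimeter_lt [ProperSpace X] {μ : Measure X} {A : Set X} {c : ℝ≥0∞}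
    (h : perimeter μ A univ < c) (x₀ : X) (R : ℝ) {ε : ℝ≥0∞} (hε : ε ≠ 0) :
    ∃ u : X → ℝ, LocallyLipschitz u ∧
      ∫⁻ x in ball x₀ R, ENNReal.ofReal |u x - A.indicator (fun _ => (1 : ℝ)) x| ∂μ ≤ ε ∧
      gradEnergy μ u univ < c := by
  rw [perimeter_univ_eq] at h
  simp only [variationOn, iInf_lt_iff] at h
  obtain ⟨u, ⟨hu, hlim⟩, hc⟩ := h
  have hball := hlim (ball x₀ R) isOpen_ball (isBounded_ball.isCompact_closure) (subset_univ _)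
  have hev : ∀ᶠ n in atTop, ∫⁻ x in ball x₀ R,
      ENNReal.ofReal |u n x - A.indicator (fun _ => (1 : ℝ)) x| ∂μ < ε :=
    hball.eventually_lt_const (pos_iff_ne_zero.2 hε)
  obtain ⟨n, hn, hn'⟩ := ((frequently_lt_of_liminf_lt (by isBoundedDefault) hc).and_eventually
    hev).exists
  exact ⟨u n, locLipschitzOn_univ_iff.1 (hu n), hn'.le, hn⟩

theorem ofReal_abs_sub_le_add (a b c : ℝ) :
    ENNReal.ofReal |a - c| ≤ ENNReal.ofReal |a - b| + ENNReal.ofReal |b - c| := by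
  rw [← ENNReal.ofReal_add (abs_nonneg _) (abs_nonneg _)]
  exact ENNReal.ofReal_le_ofReal (abs_sub_le a b c)

theorem measurable_ofReal_abs_sub_indicator {u : X → ℝ} (hu : LocallyLipschitz u) {A : Set X}
    (hA : MeasurableSet A) :
    Measurable fun x => ENNReal.ofReal |u x - A.indicator (fun _ => (1 : ℝ)) x| := by
  have h1 : Measurable u := hu.continuous.measurable
  have h2 : Measurable (A.indicator fun _ => (1 : ℝ)) := measurable_const.indicator hA
  exact (continuous_abs.measurable.comp (h1.sub h2)).ennreal_ofReal

/-- If `A` can be approximated locally in measure by sets of perimeter at most `c`, then `A` has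
perimeter at most `c`. -/
theorem perimeter_le_of_forall_approx [ProperSpace X] (μ : Measure X) (x₀ : X) {A : Set X}
    {c : ℝ≥0∞}
    (h : ∀ (R : ℝ) (ε : ℝ≥0∞), ε ≠ 0 → ∃ B, MeasurableSet B ∧
      μ (symmDiff A B ∩ ball x₀ R) ≤ ε ∧ perimeter μ B univ ≤ c) :
    perimeter μ A univ ≤ c := by
  by_contra! hlt
  obtain ⟨a, hca, haA⟩ := exists_between hlt
  obtain ⟨R, ε, hε, hR⟩ := exists_ball_le_gradEnergy μ x₀ (Or.inl haA)
  have hε2 : ε / 2 ≠ 0 := by simp [hε]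
  obtain ⟨B, hB, hAB, hBc⟩ := h R (ε / 2) hε2
  obtain ⟨u, hu, huB, hua⟩ := exists_approx_of_perimeter_lt (hBc.trans_lt hca) x₀ R hε2
  refine hua.not_ge (hR u hu ?_)
  calc ∫⁻ x in ball x₀ R, ENNReal.ofReal |u x - A.indicator (fun _ => (1 : ℝ)) x| ∂μ
      ≤ ∫⁻ x in ball x₀ R, (ENNReal.ofReal |u x - B.indicator (fun _ => (1 : ℝ)) x| +
          (symmDiff A B).indicator 1 x) ∂μ := by
        refine lintegral_mono fun x => ?_
        by_cases hxA : x ∈ A <;> by_cases hxB : x ∈ B <;>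
          simp only [Set.indicator, hxA, hxB, mem_symmDiff, Pi.one_apply, if_true, if_false,
            not_true, not_false_iff, and_true, and_false, or_true, or_false]
        · simp
        · simpa using ofReal_abs_sub_le_add (u x) 0 1
        · simpa using ofReal_abs_sub_le_add (u x) 1 0
        · simp
    _ = ∫⁻ x in ball x₀ R, ENNReal.ofReal |u x - B.indicator (fun _ => (1 : ℝ)) x| ∂μ +
          ∫⁻ x in ball x₀ R, (symmDiff A B).indicator 1 x ∂μ :=
        lintegral_add_left (measurable_ofReal_abs_sub_indicator hu hB) _
    _ ≤ ε / 2 + ε / 2 := by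
        refine add_le_add huB ((lintegral_indicator_one_le _).trans ?_)
        rwa [Measure.restrict_apply' measurableSet_ball]
    _ = ε := ENNReal.add_halves ε

theorem perimeter_congr_ae [ProperSpace X] [Nonempty X] {μ : Measure X} {A B : Set X}
    (hA : MeasurableSet A) (hB : MeasurableSet B) (h : μ (symmDiff A B) = 0) :
    perimeter μ A univ = perimeter μ B univ := by
  have x₀ : X := Classical.arbitrary X
  refine le_antisymm (perimeter_le_of_forall_approx μ x₀ fun R ε _ => ⟨B, hB, ?_, le_rfl⟩)
    (perimeter_le_of_forall_approx μ x₀ fun R ε _ => ⟨A, hA, ?_, le_rfl⟩)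
  · exact (measure_mono_null inter_subset_left h).le.trans zero_le
  · rw [symmDiff_comm]
    exact (measure_mono_null inter_subset_left h).le.trans zero_le

theorem perimeter_compl_le [ProperSpace X] [Nonempty X] (μ : Measure X) (A : Set X) :
    perimeter μ Aᶜ univ ≤ perimeter μ A univ := by
  have x₀ : X := Classical.arbitrary X
  by_contra! hlt
  obtain ⟨a, hca, haA⟩ := exists_between hlt
  obtain ⟨R, ε, hε, hR⟩ := exists_ball_le_gradEnergy μ x₀ (Or.inl haA)
  obtain ⟨u, hu, huA, hua⟩ := exists_approx_of_perimeter_lt hca x₀ R hε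
  have hu' : LocallyLipschitz fun x => 1 - u x := by
    intro x
    obtain ⟨K, t, ht, hK⟩ := hu x
    refine ⟨K, t, ht, fun y hy z hz => ?_⟩
    rw [edist_sub_left]
    exact hK hy hz
  refine (hua.trans_le (hR _ hu' (le_trans (le_of_eq ?_) huA))).not_ge (gradEnergy_one_sub_le μ u)
  refine lintegral_congr fun x => ?_
  by_cases hx : x ∈ A
  · rw [← abs_neg]; simp [hx]
  · rw [← abs_neg]; simp [hx]

theorem perimeter_compl [ProperSpace X] [Nonempty X] (μ : Measure X) (A : Set X) :
    perimeter μ Aᶜ univ = perimeter μ A univ :=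
  le_antisymm (perimeter_compl_le μ A) (by simpa using perimeter_compl_le μ Aᶜ)

theorem perimeter_empty [Nonempty X] (μ : Measure X) : perimeter μ ∅ univ = 0 := by
  have x₀ : X := Classical.arbitrary X
  by_contra hne
  obtain ⟨a, ha, haA⟩ := exists_between (pos_iff_ne_zero.2 hne)
  obtain ⟨R, ε, hε, hR⟩ := exists_ball_le_gradEnergy μ x₀ (Or.inl haA)
  have h := hR (fun _ => 0) (LocallyLipschitz.const 0) (by simp)
  have h0 : IsUpperGradient (fun _ => 0) fun _ : X => (0 : ℝ) :=
    ⟨measurable_const, fun γ _ => by simp [UpperGradIneq]⟩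
  exact ha.not_ge (h.trans ((h0.gradEnergy_le μ).trans (by simp)))

theorem ENNReal.add_le_of_forall_lt_or_eq_zero {p q c : ℝ≥0∞}
    (h : ∀ a b, (a < p ∨ a = 0) → (b < q ∨ b = 0) → a + b ≤ c) : p + q ≤ c := by
  rcases eq_or_ne p 0 with rfl | hp
  · rw [zero_add]
    exact le_of_forall_lt_imp_le_of_dense fun b hb => by simpa using h 0 b (Or.inr rfl) (Or.inl hb)
  rcases eq_or_ne q 0 with rfl | hq
  · rw [add_zero]
    exact le_of_forall_lt_imp_le_of_dense fun b hb => by simpa using h b 0 (Or.inl hb) (Or.inr rfl)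
  by_contra! hlt
  obtain ⟨a, ha, b, hb, hab⟩ := ENNReal.exists_lt_add_of_lt_add hlt hp hq
  exact hab.not_ge (h a b (Or.inl ha) (Or.inl hb))

/-- Strong subadditivity (submodularity) of the perimeter. -/
theorem perimeter_inter_add_perimeter_union_le [ProperSpace X] [Nonempty X] (μ : Measure X)
    {A B : Set X} (hA : MeasurableSet A) :
    perimeter μ (A ∩ B) univ + perimeter μ (A ∪ B) univ ≤
      perimeter μ A univ + perimeter μ B univ := by
  have x₀ : X := Classical.arbitrary X
  refine ENNReal.add_le_of_forall_lt_or_eq_zero fun a b ha hb => ?_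
  refine ENNReal.le_of_forall_pos_le_add fun η hη hfin => ?_
  rw [ENNReal.add_lt_top] at hfin
  obtain ⟨R₁, ε₁, hε₁, h₁⟩ := exists_ball_le_gradEnergy μ x₀ ha
  obtain ⟨R₂, ε₂, hε₂, h₂⟩ := exists_ball_le_gradEnergy μ x₀ hb
  have hη2 : (η : ℝ≥0∞) / 2 ≠ 0 := by simp [hη.ne']
  have hε : min ε₁ ε₂ / 2 ≠ 0 := by simp [hε₁, hε₂]
  obtain ⟨u, hu, huA, huE⟩ := exists_approx_of_perimeter_lt
    (ENNReal.lt_add_right hfin.1.ne hη2) x₀ (max R₁ R₂) hε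
  obtain ⟨v, hv, hvB, hvE⟩ := exists_approx_of_perimeter_lt
    (ENNReal.lt_add_right hfin.2.ne hη2) x₀ (max R₁ R₂) hε
  have hsum : ∫⁻ x in ball x₀ (max R₁ R₂),
      (ENNReal.ofReal |u x - A.indicator (fun _ => (1 : ℝ)) x| +
        ENNReal.ofReal |v x - B.indicator (fun _ => (1 : ℝ)) x|) ∂μ ≤ min ε₁ ε₂ := by
    rw [lintegral_add_left (measurable_ofReal_abs_sub_indicator hu hA), ← ENNReal.add_halves
      (min ε₁ ε₂)]
    exact add_le_add huA hvB
  have hmin : a ≤ gradEnergy μ (fun x => min (u x) (v x)) univ := by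
    refine h₁ _ (hu.min hv) ((lintegral_mono_set (ball_subset_ball (le_max_left _ _))).trans
      (le_trans (lintegral_mono fun x => ?_) (hsum.trans (min_le_left _ _))))
    have hind : (A ∩ B).indicator (fun _ => (1 : ℝ)) x =
        min (A.indicator (fun _ => (1 : ℝ)) x) (B.indicator (fun _ => (1 : ℝ)) x) := by
      by_cases hxA : x ∈ A <;> by_cases hxB : x ∈ B <;> simp [hxA, hxB]
    rw [hind, ← ENNReal.ofReal_add (abs_nonneg _) (abs_nonneg _)]
    exact ENNReal.ofReal_le_ofReal ((abs_min_sub_min_le_max _ _ _ _).trans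
      (max_le_add_of_nonneg (abs_nonneg _) (abs_nonneg _)))
  have hmax : b ≤ gradEnergy μ (fun x => max (u x) (v x)) univ := by
    refine h₂ _ (hu.max hv) ((lintegral_mono_set (ball_subset_ball (le_max_right _ _))).trans
      (le_trans (lintegral_mono fun x => ?_) (hsum.trans (min_le_right _ _))))
    have hind : (A ∪ B).indicator (fun _ => (1 : ℝ)) x =
        max (A.indicator (fun _ => (1 : ℝ)) x) (B.indicator (fun _ => (1 : ℝ)) x) := by
      by_cases hxA : x ∈ A <;> by_cases hxB : x ∈ B <;> simp [hxA, hxB]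
    rw [hind, ← ENNReal.ofReal_add (abs_nonneg _) (abs_nonneg _)]
    exact ENNReal.ofReal_le_ofReal ((abs_max_sub_max_le_max _ _ _ _).trans
      (max_le_add_of_nonneg (abs_nonneg _) (abs_nonneg _)))
  calc a + b ≤ _ + _ := add_le_add hmin hmax
    _ ≤ gradEnergy μ u univ + gradEnergy μ v univ := by
        rw [add_comm]; exact gradEnergy_max_add_gradEnergy_min_le hu hv
    _ ≤ (perimeter μ A univ + η / 2) + (perimeter μ B univ + η / 2) :=
        add_le_add huE.le hvE.le
    _ = perimeter μ A univ + perimeter μ B univ + η := by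
        rw [add_add_add_comm, ENNReal.add_halves]

theorem perimeter_union_le [ProperSpace X] [Nonempty X] (μ : Measure X) {A B : Set X}
    (hA : MeasurableSet A) :
    perimeter μ (A ∪ B) univ ≤ perimeter μ A univ + perimeter μ B univ :=
  le_add_self.trans (perimeter_inter_add_perimeter_union_le μ hA)

theorem perimeter_iUnion_le [ProperSpace X] [Nonempty X] (μ : Measure X)
    (hfin : ∀ (x : X) (r : ℝ), μ (ball x r) ≠ ⊤) {F : ℕ → Set X}
    (hF : ∀ i, MeasurableSet (F i)) :
    perimeter μ (⋃ i, F i) univ ≤ ∑' i, perimeter μ (F i) univ := by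
  have x₀ : X := Classical.arbitrary X
  have hm : ∀ n, MeasurableSet (⋃ i ∈ Finset.range n, F i) :=
    fun n => Finset.measurableSet_biUnion _ fun i _ => hF i
  have hpart : ∀ n, perimeter μ (⋃ i ∈ Finset.range n, F i) univ ≤
      ∑ i ∈ Finset.range n, perimeter μ (F i) univ := by
    intro n
    induction n with
    | zero => simp [perimeter_empty]
    | succ n ih =>
      rw [Finset.range_add_one, Finset.set_biUnion_insert,
        Finset.sum_insert Finset.notMem_range_self]
      exact (perimeter_union_le μ (hF n)).trans (by gcongr)
  refine perimeter_le_of_forall_approx μ x₀ fun R ε hε => ?_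
  have hlim : Tendsto (fun n => μ (((⋃ i, F i) \ ⋃ i ∈ Finset.range n, F i) ∩ ball x₀ R))
      atTop (𝓝 0) := by
    have hI : ⋂ n, (((⋃ i, F i) \ ⋃ i ∈ Finset.range n, F i) ∩ ball x₀ R) = ∅ := by
      refine eq_empty_of_forall_notMem fun x hx => ?_
      rw [mem_iInter] at hx
      obtain ⟨i, hi⟩ := mem_iUnion.1 (hx 0).1.1
      exact (hx (i + 1)).1.2 (mem_iUnion₂.2 ⟨i, by simp, hi⟩)
    rw [← measure_empty (μ := μ), ← hI]
    refine tendsto_measure_iInter_atTop (fun n => (((MeasurableSet.iUnion hF).diff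
      (hm n)).inter measurableSet_ball).nullMeasurableSet) (fun n k hnk => ?_)
      ⟨0, ne_top_of_le_ne_top (hfin x₀ R) (measure_mono inter_subset_right)⟩
    refine inter_subset_inter_left _ (sdiff_subset_sdiff_right ?_)
    exact biUnion_subset_biUnion_left fun i hi =>
      Finset.range_mono hnk hi
  obtain ⟨n, hn⟩ := (hlim.eventually_lt_const (pos_iff_ne_zero.2 hε)).exists
  refine ⟨_, hm n, ?_, (hpart n).trans (ENNReal.sum_le_tsum _)⟩
  have hsub : (⋃ i ∈ Finset.range n, F i) ⊆ ⋃ i, F i :=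
    iUnion₂_subset fun i _ => subset_iUnion F i
  rw [symmDiff_def, sdiff_eq_bot_iff.2 hsub, sup_bot_eq]
  exact hn.le

theorem perimeter_biUnion_le [ProperSpace X] [Nonempty X] (μ : Measure X)
    (hfin : ∀ (x : X) (r : ℝ), μ (ball x r) ≠ ⊤) {I : Set ℕ} {F : ℕ → Set X}
    (hF : ∀ i ∈ I, MeasurableSet (F i)) :
    perimeter μ (⋃ i ∈ I, F i) univ ≤ ∑' i : I, perimeter μ (F i) univ := by
  classical
  have hU : ⋃ i ∈ I, F i = ⋃ i, ⋃ (_ : i ∈ I), F i := rfl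
  rw [hU]
  refine (perimeter_iUnion_le μ hfin fun i => MeasurableSet.iUnion fun hi => hF i hi).trans_eq ?_
  rw [tsum_subtype I fun i => perimeter μ (F i) univ]
  refine tsum_congr fun i => ?_
  by_cases hi : i ∈ I <;> simp [hi, perimeter_empty]

/-- In a space supporting a Poincaré inequality, a set of zero perimeter is trivial in balls. -/
theorem measure_inter_ball_eq_zero_or [ProperSpace X] {μ : Measure X}
    (hball : ∀ (x : X) (r : ℝ), 0 < r → 0 < μ (ball x r) ∧ μ (ball x r) < ⊤)
    (hP : SupportsPoincare μ) {A : Set X} (hA : MeasurableSet A) (h0 : perimeter μ A univ = 0)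
    (x : X) {r : ℝ} (hr : 0 < r) : μ (A ∩ ball x r) = 0 ∨ μ (ball x r \ A) = 0 := by
  obtain ⟨C, lam, hC, hlam, hPI⟩ := hP
  have : IsLocallyFiniteMeasure μ :=
    ⟨fun y => ⟨ball y 1, ball_mem_nhds y one_pos, (hball y 1 one_pos).2⟩⟩
  have hLr : 0 < lam * r := by positivity
  set L := μ (ball x (lam * r)) with hL
  set M := min (μ (A ∩ ball x r)) (μ (ball x r \ A)) with hM
  have hlow : ∀ c : ℝ, M ≤
      ∫⁻ y in ball x r, ENNReal.ofReal |A.indicator (fun _ => (1 : ℝ)) y - c| ∂μ := by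
    intro c
    rw [← lintegral_add_compl _ hA,
      setLIntegral_congr_fun (g := fun _ => ENNReal.ofReal |1 - c|) hA
        (fun y hy => by simp [indicator_of_mem hy]),
      setLIntegral_congr_fun (g := fun _ => ENNReal.ofReal |c|) hA.compl
        (fun y hy => by simp [indicator_of_notMem hy]),
      setLIntegral_const, setLIntegral_const, Measure.restrict_apply hA,
      Measure.restrict_apply hA.compl]
    have hsum : 1 ≤ ENNReal.ofReal |1 - c| + ENNReal.ofReal |c| := by
      rw [← ENNReal.ofReal_add (abs_nonneg _) (abs_nonneg _), ← ENNReal.ofReal_one]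
      refine ENNReal.ofReal_le_ofReal ?_
      have := abs_add_le (1 - c) c
      simpa using this
    calc M = 1 * M := (one_mul M).symm
      _ ≤ (ENNReal.ofReal |1 - c| + ENNReal.ofReal |c|) * M := by gcongr
      _ ≤ _ := by
        rw [add_mul]
        gcongr
        · exact min_le_left _ _
        · rw [inter_comm, ← sdiff_eq]; exact min_le_right _ _
  have hest : ∀ ε : ℝ≥0∞, ε ≠ 0 →
      L * M ≤ ε * (L + ENNReal.ofReal (C * r) * μ (ball x r)) := by
    intro ε hε
    obtain ⟨u, hu, huA, huE⟩ := exists_approx_of_perimeter_lt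
      (by rw [h0]; exact pos_iff_ne_zero.2 hε) x r hε
    obtain ⟨g, hg, hgE⟩ := exists_isUpperGradient_of_gradEnergy_lt huE
    have hpoin := hPI x r hr u g (fun y s =>
      (hu.continuous.locallyIntegrable.integrableOn_isCompact
        (isCompact_closedBall y s)).mono_set ball_subset_closedBall) hg
    set c := ⨍ z in ball x r, u z ∂μ
    have hM' : M ≤ ∫⁻ y in ball x r,
        ENNReal.ofReal |u y - A.indicator (fun _ => (1 : ℝ)) y| ∂μ +
        ∫⁻ y in ball x r, ENNReal.ofReal |u y - c| ∂μ := by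
      rw [← lintegral_add_left (measurable_ofReal_abs_sub_indicator hu hA)]
      refine (hlow c).trans (lintegral_mono fun y => ?_)
      have := ofReal_abs_sub_le_add (A.indicator (fun _ => (1 : ℝ)) y) (u y) c
      rwa [abs_sub_comm _ (u y)] at this
    have hgE' : ∫⁻ y in ball x (lam * r), g y ∂μ ≤ ε :=
      (setLIntegral_le_lintegral _ _).trans hgE.le
    calc L * M ≤ L * (ε + ∫⁻ y in ball x r, ENNReal.ofReal |u y - c| ∂μ) := by
          gcongr; exact hM'.trans (by gcongr)
      _ = L * ε + L * ∫⁻ y in ball x r, ENNReal.ofReal |u y - c| ∂μ := mul_add _ _ _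
      _ ≤ L * ε + ENNReal.ofReal (C * r) * μ (ball x r) * ε := by
          exact add_le_add le_rfl (hpoin.trans (mul_le_mul_right hgE' _))
      _ = ε * (L + ENNReal.ofReal (C * r) * μ (ball x r)) := by ring
  have hK : L + ENNReal.ofReal (C * r) * μ (ball x r) ≠ ⊤ :=
    ENNReal.add_ne_top.2 ⟨(hball x _ hLr).2.ne,
      ENNReal.mul_ne_top ENNReal.ofReal_ne_top (hball x r hr).2.ne⟩
  have hLM : L * M = 0 := by
    by_contra hne
    obtain ⟨ε, hε, hlt⟩ := ENNReal.exists_nnreal_pos_mul_lt hK hne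
    exact hlt.not_ge (hest ε (by exact_mod_cast hε.ne'))
  rcases mul_eq_zero.1 hLM with h | h
  · exact absurd h (hball x _ hLr).1.ne'
  · rcases min_eq_iff.1 h with h | h
    · exact Or.inl h.1
    · exact Or.inr h.1

/-- In a space of infinite measure supporting a Poincaré inequality, a set of finite measure and
zero perimeter is negligible. -/
theorem measure_eq_zero_of_perimeter_eq_zero [ProperSpace X] [Nonempty X] {μ : Measure X}
    (hball : ∀ (x : X) (r : ℝ), 0 < r → 0 < μ (ball x r) ∧ μ (ball x r) < ⊤)
    (hP : SupportsPoincare μ) (hinf : μ univ = ⊤) {A : Set X} (hA : MeasurableSet A)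
    (hAfin : μ A < ⊤) (h0 : perimeter μ A univ = 0) : μ A = 0 := by
  have x₀ : X := Classical.arbitrary X
  by_contra hne
  have hex : ∃ n : ℕ, μ (A ∩ ball x₀ n) ≠ 0 := by
    by_contra! hcon
    refine hne ?_
    rw [← inter_univ A, ← iUnion_ball_nat x₀, inter_iUnion]
    exact measure_iUnion_null hcon
  obtain ⟨n, hn⟩ := hex
  have hc : μ Aᶜ = 0 := by
    rw [← inter_univ Aᶜ, ← iUnion_ball_nat x₀, inter_iUnion]
    refine measure_iUnion_null fun k => ?_
    have hsub : Aᶜ ∩ ball x₀ k ⊆ ball x₀ ((max n k : ℕ) + 1 : ℝ) \ A := fun y hy =>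
      ⟨ball_subset_ball (by push_cast; linarith [le_max_right (n : ℝ) k]) hy.2, hy.1⟩
    refine measure_mono_null hsub ((measure_inter_ball_eq_zero_or hball hP hA h0 x₀
      (by positivity)).resolve_left fun h => hn (measure_mono_null ?_ h))
    exact inter_subset_inter_right _
      (ball_subset_ball (by push_cast; linarith [le_max_left (n : ℝ) k]))
  have : μ univ ≤ μ A := by
    rw [← union_compl_self A]
    exact (measure_union_le _ _).trans (by simp [hc])
  exact (this.trans_lt hAfin).ne hinf

/-- If the perimeter is additive on the partition `{F, G}`, then it is additive on the partition
induced on any subset of finite perimeter. -/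
theorem perimeter_inter_add_perimeter_inter_le [ProperSpace X] [Nonempty X] {μ : Measure X}
    {E F G : Set X} (hE : MeasurableSet E) (hF : MeasurableSet F) (hFG : Disjoint F G)
    (hsub : E ⊆ F ∪ G)
    (hadd : perimeter μ (F ∪ G) univ = perimeter μ F univ + perimeter μ G univ)
    (hfin : perimeter μ (F ∪ G) univ < ⊤) (hEfin : perimeter μ E univ < ⊤) :
    perimeter μ (E ∩ F) univ + perimeter μ (E ∩ G) univ ≤ perimeter μ E univ := by
  have h1 := perimeter_inter_add_perimeter_union_le μ (B := F) hE
  have h2 := perimeter_inter_add_perimeter_union_le μ (B := G) hE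
  have h3 := perimeter_inter_add_perimeter_union_le μ (B := E ∪ G) (hE.union hF)
  rw [← union_inter_distrib_left, hFG.inter_eq, union_empty, ← union_union_distrib_left,
    union_eq_self_of_subset_left hsub] at h3
  refine ENNReal.le_of_add_le_add_right (a := perimeter μ E univ + perimeter μ (F ∪ G) univ)
    (ENNReal.add_ne_top.2 ⟨hEfin.ne, hfin.ne⟩) ?_
  calc _ ≤ perimeter μ (E ∩ F) univ + perimeter μ (E ∩ G) univ +
        (perimeter μ (E ∪ F) univ + perimeter μ (E ∪ G) univ) := by gcongr
    _ = (perimeter μ (E ∩ F) univ + perimeter μ (E ∪ F) univ) +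
        (perimeter μ (E ∩ G) univ + perimeter μ (E ∪ G) univ) := by ring
    _ ≤ (perimeter μ E univ + perimeter μ F univ) + (perimeter μ E univ + perimeter μ G univ) :=
        add_le_add h1 h2
    _ = perimeter μ E univ + (perimeter μ E univ + perimeter μ (F ∪ G) univ) := by
        rw [hadd]; ring

/-- An indecomposable subset of an additive partition lies essentially in one of its parts. -/
theorem IsIndecomposableIn.measure_inter_eq_zero_or [ProperSpace X] [Nonempty X] {μ : Measure X}
    {E F G : Set X} (hind : IsIndecomposableIn μ E univ) (hE : MeasurableSet E)
    (hF : MeasurableSet F) (hG : MeasurableSet G) (hFG : Disjoint F G) (hsub : E ⊆ F ∪ G)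
    (hadd : perimeter μ (F ∪ G) univ = perimeter μ F univ + perimeter μ G univ)
    (hfin : perimeter μ (F ∪ G) univ < ⊤) (hEfin : perimeter μ E univ < ⊤) :
    μ (E ∩ F) = 0 ∨ μ (E ∩ G) = 0 := by
  by_contra! hne
  have hle := perimeter_inter_add_perimeter_inter_le hE hF hFG hsub hadd hfin hEfin
  have hU : E ∩ F ∪ E ∩ G = E := by rw [← inter_union_distrib_left, inter_eq_left.2 hsub]
  refine hind ⟨E ∩ F, E ∩ G, hE.inter hF, hE.inter hG,
    hFG.mono inter_subset_right inter_subset_right, by rw [hU, inter_univ],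
    (le_self_add.trans hle).trans_lt hEfin, (le_add_self.trans hle).trans_lt hEfin,
    pos_iff_ne_zero.2 hne.1, pos_iff_ne_zero.2 hne.2, le_antisymm ?_ hle⟩
  have := perimeter_union_le μ (B := E ∩ G) (hE.inter hF)
  rwa [hU] at this

/-- The perimeter is additive on the splitting of an essential partition in two subfamilies. -/
theorem IsEssentialPartition.perimeter_eq_add [ProperSpace X] [Nonempty X] {μ : Measure X}
    (hfin : ∀ (x : X) (r : ℝ), μ (ball x r) ≠ ⊤) {A : Set X} {I : Set ℕ} {F : ℕ → Set X}
    (h : IsEssentialPartition μ A I F) {K K' : Set ℕ} (hK : Disjoint K K') (hI : K ∪ K' = I) :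
    perimeter μ A univ =
      perimeter μ (⋃ i ∈ K, F i) univ + perimeter μ (⋃ i ∈ K', F i) univ := by
  obtain ⟨hm, -, hU, -, -, -, hP⟩ := h
  subst hI
  have hmK : ∀ i ∈ K, MeasurableSet (F i) := fun i hi => hm i (Or.inl hi)
  have hmK' : ∀ i ∈ K', MeasurableSet (F i) := fun i hi => hm i (Or.inr hi)
  refine le_antisymm ?_ ?_
  · rw [← hU, biUnion_union]
    exact perimeter_union_le μ (MeasurableSet.biUnion K.to_countable hmK)
  · rw [hP, ENNReal.summable.tsum_union_disjoint (f := fun i => perimeter μ (F i) univ) hK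
      ENNReal.summable]
    exact add_le_add (perimeter_biUnion_le μ hfin hmK) (perimeter_biUnion_le μ hfin hmK')

theorem IsEssentialPartition.disjoint_biUnion {μ : Measure X} {A : Set X} {I : Set ℕ}
    {F : ℕ → Set X} (h : IsEssentialPartition μ A I F) {K K' : Set ℕ} (hK : Disjoint K K')
    (hI : K ∪ K' = I) : Disjoint (⋃ i ∈ K, F i) (⋃ i ∈ K', F i) := by
  subst hI
  simp only [disjoint_iUnion_left, disjoint_iUnion_right]
  exact fun i hi j hj => h.2.1 j (Or.inl hj) i (Or.inr hi) (hK.ne_of_mem hj hi)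

theorem perimeter_lt_top_of_eq_add {μ : Measure X} {A B C : Set X}
    (h : perimeter μ A univ = perimeter μ B univ + perimeter μ C univ)
    (hA : perimeter μ A univ < ⊤) : perimeter μ C univ < ⊤ :=
  (le_add_self.trans_eq h.symm).trans_lt hA

/-- No part of an additive partition of a saturation is essentially made of holes. -/
theorem measure_eq_zero_of_saturationOf_eq_union [ProperSpace X] [Nonempty X] {μ : Measure X}
    (hball : ∀ (x : X) (r : ℝ), 0 < r → 0 < μ (ball x r) ∧ μ (ball x r) < ⊤)
    (hfin : ∀ (x : X) (r : ℝ), μ (ball x r) ≠ ⊤)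
    (hP : SupportsPoincare μ) (hinf : μ univ = ⊤)
    {E : Set X} (hE : MeasurableSet E) (hEfin : perimeter μ E univ < ⊤)
    {I : Set ℕ} {G : ℕ → Set X} (hdec : IsEssentialPartition μ (univ \ E) I G)
    {A B : Set X} (hA : MeasurableSet A) (hB : MeasurableSet B) (hAB : Disjoint A B)
    (hU : A ∪ B = saturationOf μ E I G)
    (hadd : perimeter μ (A ∪ B) univ = perimeter μ A univ + perimeter μ B univ)
    (hABfin : perimeter μ (A ∪ B) univ < ⊤) (hEB : μ (E ∩ B) = 0) : μ B = 0 := by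
  by_contra hne
  obtain ⟨i, ⟨hiI, hiμ⟩, hi⟩ : ∃ i, (i ∈ I ∧ μ (G i) < ⊤) ∧ μ (G i ∩ B) ≠ 0 := by
    by_contra! hcon
    refine hne (measure_mono_null (t := E ∩ B ∪ ⋃ (i : ℕ) (_ : i ∈ I ∧ μ (G i) < ⊤), G i ∩ B)
      (fun x hx => ?_) (measure_union_null hEB
        (measure_iUnion_null fun i => measure_iUnion_null fun hi => hcon i hi)))
    have hxS : x ∈ saturationOf μ E I G := hU ▸ Or.inr hx
    rcases hxS with h | h
    · exact Or.inl ⟨h, hx⟩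
    · obtain ⟨i, hi, hxi⟩ := mem_iUnion₂.1 h
      exact Or.inr (mem_iUnion₂.2 ⟨i, hi, hxi, hx⟩)
  have hm := hdec.1 i hiI
  have hESub : E ⊆ A ∪ B := hU ▸ subset_union_left
  have hGSub : G i ⊆ A ∪ B := by
    rw [hU]
    exact fun x hx => Or.inr (mem_iUnion₂.2 ⟨i, ⟨hiI, hiμ⟩, hx⟩)
  have hGA : μ (G i ∩ A) = 0 :=
    ((hdec.2.2.2.2.2.1 i hiI).measure_inter_eq_zero_or hm hA hB hAB hGSub hadd hABfin
      (hdec.2.2.2.2.1 i hiI)).resolve_right hi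
  have hnull : μ (G i ∩ A ∪ E ∩ B) = 0 := measure_union_null hGA hEB
  have hEGm : MeasurableSet (E ∪ G i) := hE.union hm
  have hEGfin : perimeter μ (E ∪ G i) univ < ⊤ :=
    (perimeter_union_le μ hE).trans_lt (ENNReal.add_lt_top.2 ⟨hEfin, hdec.2.2.2.2.1 i hiI⟩)
  have hsplit := perimeter_inter_add_perimeter_inter_le hEGm hA hAB (union_subset hESub hGSub)
    hadd hABfin hEGfin
  have hEi : Disjoint E (G i) := by
    have : G i ⊆ univ \ E := hdec.2.2.1 ▸ subset_biUnion_of_mem hiI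
    exact disjoint_left.2 fun x hxE hxG => (this hxG).2 hxE
  rw [perimeter_congr_ae (hEGm.inter hA) hE (measure_mono_null (fun x hx => ?_) hnull),
    perimeter_congr_ae (hEGm.inter hB) hm (measure_mono_null (fun x hx => ?_) hnull)] at hsplit
  rotate_left
  · have h1 := @hGSub x
    have h2 : x ∈ E → x ∉ G i := fun h => disjoint_left.1 hEi h
    have h3 : x ∈ A → x ∉ B := fun h => disjoint_left.1 hAB h
    simp only [mem_symmDiff, mem_inter_iff, mem_union] at hx h1 ⊢
    tauto
  · have h1 := @hESub x
    have h2 : x ∈ E → x ∉ G i := fun h => disjoint_left.1 hEi h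
    have h3 : x ∈ A → x ∉ B := fun h => disjoint_left.1 hAB h
    simp only [mem_symmDiff, mem_inter_iff, mem_union] at hx h1 ⊢
    tauto
  have hI : {i} ∪ I \ {i} = I := by simp [insert_eq_of_mem hiI]
  have hrest := hdec.perimeter_eq_add hfin disjoint_sdiff_right hI
  have hdisj := hdec.disjoint_biUnion disjoint_sdiff_right hI
  rw [biUnion_singleton] at hrest hdisj
  have hcompl : (E ∪ G i)ᶜ = ⋃ j ∈ I \ {i}, G j := by
    have hUn : G i ∪ ⋃ j ∈ I \ {i}, G j = univ \ E := by
      rw [← hdec.2.2.1, ← biUnion_singleton i G, ← biUnion_union, hI]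
    ext x
    have h1 := Set.ext_iff.1 hUn x
    have h2 : x ∈ G i → x ∉ ⋃ j ∈ I \ {i}, G j := fun h => disjoint_left.1 hdisj h
    simp only [mem_compl_iff, mem_union, Set.mem_sdiff, mem_univ, true_and] at h1 ⊢
    tauto
  rw [← hcompl, perimeter_compl, ← compl_eq_univ_sdiff, perimeter_compl] at hrest
  have hzero : perimeter μ (G i) univ = 0 := by
    have hle : perimeter μ (E ∪ G i) univ + perimeter μ (G i) univ ≤
        perimeter μ (E ∪ G i) univ + 0 := by
      rw [add_zero]
      refine le_trans ?_ hsplit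
      rw [hrest]
      gcongr
      exact le_add_self
    exact le_antisymm (ENNReal.le_of_add_le_add_left hEGfin.ne hle) zero_le
  exact hi (measure_mono_null inter_subset_left
    (measure_eq_zero_of_perimeter_eq_zero hball hP hinf hm hiμ hzero))

theorem isIndecomposableIn_saturationOf [ProperSpace X] [Nonempty X] {μ : Measure X}
    (hball : ∀ (x : X) (r : ℝ), 0 < r → 0 < μ (ball x r) ∧ μ (ball x r) < ⊤)
    (hfin : ∀ (x : X) (r : ℝ), μ (ball x r) ≠ ⊤)
    (hP : SupportsPoincare μ) (hinf : μ univ = ⊤)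
    {E : Set X} (hE : MeasurableSet E) (hEfin : perimeter μ E univ < ⊤)
    (hindec : IsIndecomposableIn μ E univ)
    {I : Set ℕ} {G : ℕ → Set X} (hdec : IsEssentialPartition μ (univ \ E) I G) :
    IsIndecomposableIn μ (saturationOf μ E I G) univ := by
  rintro ⟨A, B, hA, hB, hAB, hU, hAfin, hBfin, hAμ, hBμ, hadd⟩
  rw [inter_univ] at hU
  rw [← hU] at hadd
  have hABfin : perimeter μ (A ∪ B) univ < ⊤ := hadd ▸ ENNReal.add_lt_top.2 ⟨hAfin, hBfin⟩
  rcases hindec.measure_inter_eq_zero_or hE hA hB hAB (hU ▸ subset_union_left) hadd hABfin hEfin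
    with h | h
  · rw [union_comm] at hU hadd hABfin
    rw [add_comm] at hadd
    exact hAμ.ne' (measure_eq_zero_of_saturationOf_eq_union hball hfin hP hinf hE hEfin hdec hB hA
      hAB.symm hU hadd hABfin h)
  · exact hBμ.ne' (measure_eq_zero_of_saturationOf_eq_union hball hfin hP hinf hE hEfin hdec hA hB
      hAB hU hadd hABfin h)

/-- The complement of a saturation is the union of the components of infinite measure. -/
theorem univ_sdiff_saturationOf {μ : Measure X} {E : Set X} {I : Set ℕ} {G : ℕ → Set X}
    (hdec : IsEssentialPartition μ (univ \ E) I G) :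
    univ \ saturationOf μ E I G = ⋃ i ∈ {i ∈ I | μ (G i) = ⊤}, G i := by
  ext x
  have hx : x ∈ ⋃ i ∈ I, G i ↔ x ∈ univ \ E := by rw [hdec.2.2.1]
  simp only [saturationOf, Set.mem_sdiff, mem_univ, true_and, mem_union, mem_iUnion, not_or,
    mem_ofPred_eq, exists_prop, not_exists, not_and] at hx ⊢
  constructor
  · rintro ⟨hxE, hxn⟩
    obtain ⟨i, hi, hxi⟩ := hx.2 hxE
    exact ⟨i, ⟨hi, by_contra fun hne => hxn i ⟨hi, lt_top_iff_ne_top.2 hne⟩ hxi⟩, hxi⟩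
  · rintro ⟨i, ⟨hi, hiμ⟩, hxi⟩
    refine ⟨hx.1 ⟨i, hi, hxi⟩, fun j ⟨hj, hjμ⟩ hxj => ?_⟩
    refine disjoint_left.1 (hdec.2.1 i hi j hj ?_) hxi hxj
    rintro rfl
    exact hjμ.ne hiμ

/-- The complement of a saturation has no essential component of finite measure. -/
theorem measure_eq_top_of_isEssentialPartition_saturationOf [ProperSpace X] [Nonempty X]
    {μ : Measure X} (hfin : ∀ (x : X) (r : ℝ), μ (ball x r) ≠ ⊤)
    {E : Set X} (hcompfin : perimeter μ (univ \ E) univ < ⊤)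
    {I : Set ℕ} {G : ℕ → Set X} (hdec : IsEssentialPartition μ (univ \ E) I G)
    {J : Set ℕ} {H : ℕ → Set X}
    (hdec' : IsEssentialPartition μ (univ \ saturationOf μ E I G) J H) {j : ℕ} (hj : j ∈ J) :
    μ (H j) = ⊤ := by
  have hI : {i ∈ I | ¬ μ (G i) = ⊤} ∪ {i ∈ I | μ (G i) = ⊤} = I := by
    ext i; simp only [mem_union, mem_ofPred_eq]; tauto
  have hId : Disjoint {i ∈ I | ¬ μ (G i) = ⊤} {i ∈ I | μ (G i) = ⊤} :=
    disjoint_left.2 fun i h h' => h.2 h'.2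
  have hCfin := perimeter_lt_top_of_eq_add (hdec.perimeter_eq_add hfin hId hI) hcompfin
  rw [← univ_sdiff_saturationOf hdec] at hCfin
  have hJ : {j} ∪ J \ {j} = J := by simp [insert_eq_of_mem hj]
  have hadd := hdec'.perimeter_eq_add hfin disjoint_sdiff_right hJ
  have hdisj := hdec'.disjoint_biUnion disjoint_sdiff_right hJ
  rw [biUnion_singleton] at hadd hdisj
  have hUn : H j ∪ ⋃ k ∈ J \ {j}, H k = univ \ saturationOf μ E I G := by
    rw [← hdec'.2.2.1, ← biUnion_singleton j H, ← biUnion_union, hJ]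
  have hHm := hdec'.1 j hj
  obtain ⟨i, ⟨hiI, hiμ⟩, hi⟩ : ∃ i, (i ∈ I ∧ μ (G i) = ⊤) ∧ μ (G i ∩ H j) ≠ 0 := by
    by_contra! hcon
    refine (hdec'.2.2.2.1 j hj).ne' (measure_mono_null
      (t := ⋃ (i : ℕ) (_ : i ∈ I ∧ μ (G i) = ⊤), G i ∩ H j) (fun x hx => ?_)
      (measure_iUnion_null fun i => measure_iUnion_null fun hi => hcon i hi))
    have hxC : x ∈ univ \ saturationOf μ E I G := hUn ▸ Or.inl hx
    rw [univ_sdiff_saturationOf hdec] at hxC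
    obtain ⟨i, hi, hxi⟩ := mem_iUnion₂.1 hxC
    exact mem_iUnion₂.2 ⟨i, hi, hxi, hx⟩
  have hGsub : G i ⊆ H j ∪ ⋃ k ∈ J \ {j}, H k := by
    rw [hUn, univ_sdiff_saturationOf hdec]
    exact subset_biUnion_of_mem (u := G) (s := {i ∈ I | μ (G i) = ⊤}) ⟨hiI, hiμ⟩
  rw [← hUn] at hadd hCfin
  have hrest := ((hdec.2.2.2.2.2.1 i hiI).measure_inter_eq_zero_or (hdec.1 i hiI) hHm
    (MeasurableSet.biUnion (to_countable _) fun k hk => hdec'.1 k hk.1) hdisj hGsub hadd hCfin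
    (hdec.2.2.2.2.1 i hiI)).resolve_left hi
  rw [eq_top_iff, ← hiμ]
  calc μ (G i) = μ (G i ∩ H j ∪ G i ∩ ⋃ k ∈ J \ {j}, H k) := by
        rw [← inter_union_distrib_left, inter_eq_left.2 hGsub]
    _ ≤ μ (G i ∩ H j) + μ (G i ∩ ⋃ k ∈ J \ {j}, H k) := measure_union_le _ _
    _ ≤ μ (H j) := by rw [hrest, add_zero]; exact measure_mono inter_subset_right

/-- **Proposition (ii).** In a PI space with `μ(X) = ∞`, the saturation of an
indecomposable set `E` is indecomposable and saturated; in particular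
`sat(sat(E)) = sat(E)` (up to `μ`-measure zero). -/
theorem saturation_indecomposable_and_saturated
    [ProperSpace X] (μ : Measure X)
    (hball : ∀ (x : X) (r : ℝ), 0 < r → 0 < μ (ball x r) ∧ μ (ball x r) < ⊤)
    (hPI : IsPISpace μ) (hinf : μ Set.univ = ⊤)
    (E : Set X) (hE : MeasurableSet E) (hEfin : perimeter μ E Set.univ < ⊤)
    (hindec : IsIndecomposableIn μ E Set.univ)
    (hcompfin : perimeter μ (Set.univ \ E) Set.univ < ⊤)
    (I : Set ℕ) (G : ℕ → Set X)
    (hdec : IsEssentialPartition μ (Set.univ \ E) I G) :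
    IsIndecomposableIn μ (saturationOf μ E I G) Set.univ ∧
    ∀ (J : Set ℕ) (H : ℕ → Set X),
      IsEssentialPartition μ (Set.univ \ saturationOf μ E I G) J H →
      μ (symmDiff (saturationOf μ E I G)
          (saturationOf μ (saturationOf μ E I G) J H)) = 0 := by
  have hne : Nonempty X := by
    by_contra hemp
    rw [not_nonempty_iff] at hemp
    simp [Set.univ_eq_empty_iff.2 hemp] at hinf
  have hfin : ∀ (x : X) (r : ℝ), μ (ball x r) ≠ ⊤ := fun x r => by
    rcases le_or_gt r 0 with hr | hr
    · simp [ball_eq_empty.2 hr]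
    · exact (hball x r hr).2.ne
  refine ⟨isIndecomposableIn_saturationOf hball hfin hPI.2.2 hinf hE hEfin hindec hdec,
    fun J H hdec' => ?_⟩
  have hsat : saturationOf μ (saturationOf μ E I G) J H = saturationOf μ E I G := by
    refine union_eq_self_of_subset_right (iUnion₂_subset fun j hj => absurd ?_ hj.2.ne)
    exact measure_eq_top_of_isEssentialPartition_saturationOf hfin hcompfin hdec hdec' hj.1
  simp [hsat]
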